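/- Let G be a countable discrete amenable group acting continuously on a compact metric space (X,d) and let {F_n} be a tempered Følner sequence in G with lim_{n→∞} |F_n|/log n = ∞. Then h_top(X,G) ≤ h^B_top(X,{F_n}). -/

import Mathlib

open Filter Set MeasureTheory Topology ENNReal Pointwise

variable {G X : Type*}

section Defs

variable [Group G] [MetricSpace X] [MulAction G X]

/-- The Bowen ball `B_F(x,ε) = {y : d(gx,gy) < ε for all g ∈ F}`. -/
def bowenBall (F : Finset G) (x : X) (ε : ℝ) : Set X :=
  {y : X | ∀ g ∈ F, dist (g • x) (g • y) < ε}

/-- A Følner sequence: `|F_n ∆ gF_n|/|F_n| → 0` for every `g ∈ G`. -/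
def IsFolnerSeq (F : ℕ → Finset G) : Prop :=
  ∀ g : G, Tendsto
    (fun n => ((symmDiff (F n : Set G) ((g * ·) '' (F n : Set G))).ncard : ℝ) / (F n).card)
    atTop (𝓝 0)

/-- A tempered sequence: `|⋃_{k<n} F_k⁻¹ F_n| ≤ C |F_n|` for all `n`. -/
def IsTemperedSeq (F : ℕ → Finset G) : Prop :=
  ∃ C : ℝ, 0 < C ∧ ∀ n : ℕ,
    ((⋃ k ∈ Finset.range n, ((F k : Set G)⁻¹ * (F n : Set G))).ncard : ℝ) ≤ C * (F n).card

/-- The growth condition `lim_n |F_n| / log n = ∞`. -/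
def GrowthCond (F : ℕ → Finset G) : Prop :=
  Tendsto (fun n : ℕ => ((F n).card : ℝ) / Real.log n) atTop atTop

/-- `M(Z,N,ε,s,{F_n})`: infimum of `∑ exp(-s |F_{n_i}|)` over countable families of Bowen
balls `B_{F_{n_i}}(x_i,ε)`, `n_i ≥ N`, covering `Z`. -/
noncomputable def ballM (F : ℕ → Finset G) (Z : Set X) (N : ℕ) (ε s : ℝ) : ℝ≥0∞ :=
  ⨅ (I : Set (X × ℕ)) (_ : I.Countable) (_ : ∀ p ∈ I, N ≤ p.2)
    (_ : Z ⊆ ⋃ p ∈ I, bowenBall (F p.2) p.1 ε),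
    ∑' p : I, ENNReal.ofReal (Real.exp (-s * ((F (p : X × ℕ).2).card : ℝ)))

/-- `M(Z,ε,s,{F_n}) = lim_{N→∞} M(Z,N,ε,s,{F_n})` (the quantity is nondecreasing in `N`). -/
noncomputable def ballMN (F : ℕ → Finset G) (Z : Set X) (ε s : ℝ) : ℝ≥0∞ :=
  ⨆ N : ℕ, ballM F Z N ε s

/-- `M(Z,s,{F_n}) = lim_{ε→0} M(Z,ε,s,{F_n})` (the quantity is nondecreasing as `ε` decreases). -/
noncomputable def ballMtot (F : ℕ → Finset G) (Z : Set X) (s : ℝ) : ℝ≥0∞ :=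
  ⨆ (ε : ℝ) (_ : 0 < ε), ballMN F Z ε s

/-- The Bowen topological entropy of `Z` along `{F_n}`: the critical value of `s` at which
`M(Z,s,{F_n})` jumps from `+∞` to `0`, i.e. `inf {s : M(Z,s,{F_n}) = 0}`. -/
noncomputable def bowenEnt (F : ℕ → Finset G) (Z : Set X) : ℝ≥0∞ :=
  ⨅ (s : ℝ) (_ : ballMtot F Z s = 0), ENNReal.ofReal s

/-- The weighted quantity `W(f,N,ε,s,{F_n})`. -/
noncomputable def wtW (F : ℕ → Finset G) (f : X → ℝ≥0∞) (N : ℕ) (ε s : ℝ) : ℝ≥0∞ :=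
  ⨅ (I : Set (X × ℕ)) (c : X × ℕ → ℝ≥0∞) (_ : I.Countable)
    (_ : ∀ p ∈ I, N ≤ p.2 ∧ 0 < c p ∧ c p < ⊤)
    (_ : ∀ x : X, f x ≤ ∑' p : I, c (p : X × ℕ) *
        (bowenBall (F (p : X × ℕ).2) (p : X × ℕ).1 ε).indicator (fun _ => (1 : ℝ≥0∞)) x),
    ∑' p : I, c (p : X × ℕ) * ENNReal.ofReal (Real.exp (-s * ((F (p : X × ℕ).2).card : ℝ)))

/-- `W(Z,N,ε,s,{F_n}) = W(χ_Z,N,ε,s,{F_n})`. -/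
noncomputable def wtWset (F : ℕ → Finset G) (Z : Set X) (N : ℕ) (ε s : ℝ) : ℝ≥0∞ :=
  wtW F (Z.indicator fun _ => (1 : ℝ≥0∞)) N ε s

/-- `W(Z,ε,s,{F_n}) = lim_{N→∞} W(Z,N,ε,s,{F_n})`. -/
noncomputable def wtWN (F : ℕ → Finset G) (Z : Set X) (ε s : ℝ) : ℝ≥0∞ :=
  ⨆ N : ℕ, wtWset F Z N ε s

/-- `W(Z,s,{F_n}) = lim_{ε→0} W(Z,ε,s,{F_n})`. -/
noncomputable def wtWtot (F : ℕ → Finset G) (Z : Set X) (s : ℝ) : ℝ≥0∞ :=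
  ⨆ (ε : ℝ) (_ : 0 < ε), wtWN F Z ε s

/-- The weighted Bowen topological entropy of `Z` along `{F_n}`. -/
noncomputable def wtBowenEnt (F : ℕ → Finset G) (Z : Set X) : ℝ≥0∞ :=
  ⨅ (s : ℝ) (_ : wtWtot F Z s = 0), ENNReal.ofReal s

/-- A finite open cover of `X`. -/
def IsFinOpenCover (𝒰 : Finset (Set X)) : Prop :=
  (∀ U ∈ 𝒰, IsOpen U) ∧ ⋃₀ (𝒰 : Set (Set X)) = Set.univ

/-- `N(⋁_{g∈F} g⁻¹𝒰)`: the minimal cardinality of a subcover of the refined cover, whose members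
are the sets `X(𝐔) = ⋂_{g∈F} g⁻¹ U_g` with `U_g ∈ 𝒰`. -/
noncomputable def coverNum (𝒰 : Finset (Set X)) (F : Finset G) : ℕ :=
  sInf {k : ℕ | ∃ Λ : Finset (G → Set X), Λ.card = k ∧
    (∀ u ∈ Λ, ∀ g ∈ F, u g ∈ 𝒰) ∧
    (⋃ u ∈ Λ, ⋂ g ∈ F, (fun y => g • y) ⁻¹' u g) = Set.univ}

/-- `h_top(G,𝒰) = lim_n (1/|F_n|) log N(⋁_{g∈F_n} g⁻¹𝒰)` (the limit exists by Ornstein–Weiss,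
hence equals the `limsup`). -/
noncomputable def coverTopEnt (F : ℕ → Finset G) (𝒰 : Finset (Set X)) : ℝ :=
  limsup (fun n => Real.log (coverNum 𝒰 (F n)) / (F n).card) atTop

/-- The topological entropy `h_top(X,G)`, the supremum over finite open covers. -/
noncomputable def topEnt (X : Type*) [MetricSpace X] [MulAction G X] (F : ℕ → Finset G) : ℝ≥0∞ :=
  ⨆ (𝒰 : Finset (Set X)) (_ : IsFinOpenCover 𝒰), ENNReal.ofReal (coverTopEnt F 𝒰)

/-- `M(Z,𝒰,N,s,{F_n})`: infimum of `∑_{𝐔∈Λ} exp(-s m(𝐔))` over collections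
`Λ ⊆ ⋃_{j≥N} 𝒲_{F_j}(𝒰)` covering `Z`; an element `𝐔 ∈ 𝒲_{F_j}(𝒰)` is encoded as a pair
`(j, u)` with `u g ∈ 𝒰` for `g ∈ F_j` (and `u g = ∅` elsewhere), `X(𝐔) = ⋂_{g∈F_j} g⁻¹ (u g)`
and `m(𝐔) = |F_j|`. -/
noncomputable def covM (F : ℕ → Finset G) (𝒰 : Finset (Set X)) (Z : Set X) (N : ℕ) (s : ℝ) :
    ℝ≥0∞ :=
  ⨅ (Λ : Set (ℕ × (G → Set X)))
    (_ : ∀ p ∈ Λ, N ≤ p.1 ∧ (∀ g ∈ F p.1, p.2 g ∈ 𝒰) ∧ (∀ g ∉ F p.1, p.2 g = ∅))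
    (_ : Z ⊆ ⋃ p ∈ Λ, ⋂ g ∈ F p.1, (fun y => g • y) ⁻¹' p.2 g),
    ∑' p : Λ, ENNReal.ofReal (Real.exp (-s * ((F (p : ℕ × (G → Set X)).1).card : ℝ)))

/-- `M(Z,𝒰,s,{F_n}) = lim_{N→∞} M(Z,𝒰,N,s,{F_n})`. -/
noncomputable def covMtot (F : ℕ → Finset G) (𝒰 : Finset (Set X)) (Z : Set X) (s : ℝ) : ℝ≥0∞ :=
  ⨆ N : ℕ, covM F 𝒰 Z N s

/-- The cover-based Bowen topological entropy `h^B_top(𝒰,Z,{F_n}) = inf {s : M(Z,𝒰,s,{F_n}) = 0}`. -/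
noncomputable def covBowenEnt (F : ℕ → Finset G) (𝒰 : Finset (Set X)) (Z : Set X) : ℝ≥0∞ :=
  ⨅ (s : ℝ) (_ : covMtot F 𝒰 Z s = 0), ENNReal.ofReal s

/-- `diam(𝒰) = max {diam U : U ∈ 𝒰}`. -/
noncomputable def coverDiam (𝒰 : Finset (Set X)) : ℝ≥0∞ :=
  ⨆ U ∈ 𝒰, EMetric.diam U

end Defs

section MeasureDefs

variable [Group G] [MetricSpace X] [MulAction G X] [MeasurableSpace X]

/-- The quantity `-(1/m) log μ(B)`, with value `+∞` when `μ B = 0`. -/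
noncomputable def locTerm (μ : Measure X) (B : Set X) (m : ℕ) : ℝ≥0∞ :=
  if μ B = 0 then ⊤ else ENNReal.ofReal (-(Real.log ((μ B).toReal)) / (m : ℝ))

/-- The lower local entropy `h̲_μ^{loc}(x,ε,{F_n}) = liminf_n -(1/|F_n|) log μ(B_{F_n}(x,ε))`. -/
noncomputable def lowLoc (μ : Measure X) (F : ℕ → Finset G) (x : X) (ε : ℝ) : ℝ≥0∞ :=
  liminf (fun n => locTerm μ (bowenBall (F n) x ε) (F n).card) atTop

/-- The upper local entropy `limsup_n -(1/|F_n|) log μ(B_{F_n}(x,ε))`. -/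
noncomputable def upLoc (μ : Measure X) (F : ℕ → Finset G) (x : X) (ε : ℝ) : ℝ≥0∞ :=
  limsup (fun n => locTerm μ (bowenBall (F n) x ε) (F n).card) atTop

/-- `h̲_μ^{loc}(x,{F_n}) = lim_{ε→0} h̲_μ^{loc}(x,ε,{F_n})` (a monotone limit, i.e. the
supremum over `ε > 0`). -/
noncomputable def lowLocPt (μ : Measure X) (F : ℕ → Finset G) (x : X) : ℝ≥0∞ :=
  ⨆ (ε : ℝ) (_ : 0 < ε), lowLoc μ F x ε

/-- `h̲_μ^{loc}({F_n}) = ∫_X h̲_μ^{loc}(x,{F_n}) dμ(x)`. -/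
noncomputable def lowLocEnt (μ : Measure X) (F : ℕ → Finset G) : ℝ≥0∞ :=
  ∫⁻ x, lowLocPt μ F x ∂μ

/-- A finite measurable partition of `X`, presented as `P : Fin k → Set X`. -/
def IsMeasPartition {k : ℕ} (P : Fin k → Set X) : Prop :=
  (∀ i, MeasurableSet (P i)) ∧ Pairwise (Function.onFun Disjoint P) ∧ (⋃ i, P i) = Set.univ

/-- The static entropy `H_μ(𝒫_F)` of the join `𝒫_F = ⋁_{g∈F} g⁻¹𝒫`; its atoms are the
nonempty sets `⋂_{g∈F} g⁻¹ P(u g)` (distinct choices `u` yield disjoint atoms, and empty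
atoms contribute `0`). -/
noncomputable def partH (μ : Measure X) {k : ℕ} (P : Fin k → Set X) (F : Finset G) : ℝ :=
  letI := Classical.decEq G
  ∑ u : (↥F → Fin k),
    Real.negMulLog ((μ (⋂ g : ↥F, (fun y => (g : G) • y) ⁻¹' P (u g))).toReal)

/-- `h_μ(G,𝒫) = liminf_n (1/|F_n|) H_μ(𝒫_{F_n})`. -/
noncomputable def partEnt (μ : Measure X) (F : ℕ → Finset G) {k : ℕ} (P : Fin k → Set X) : ℝ :=
  liminf (fun n => partH μ P (F n) / (F n).card) atTop

/-- The measure-theoretic entropy `h_μ(X,G) = sup_𝒫 h_μ(G,𝒫)` (it is independent of the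
Følner sequence used to compute it). -/
noncomputable def measEnt (μ : Measure X) (F : ℕ → Finset G) : ℝ≥0∞ :=
  ⨆ (k : ℕ) (P : Fin k → Set X) (_ : IsMeasPartition P), ENNReal.ofReal (partEnt μ F P)

/-- Ergodicity of the `G`-action w.r.t. `μ`. -/
def IsErgodicGAction (G : Type*) [Group G] [MulAction G X] (μ : Measure X) : Prop :=
  ∀ A : Set X, MeasurableSet A → (∀ g : G, (g • ·) ⁻¹' A = A) → μ A = 0 ∨ μ A = 1

end MeasureDefs

/-!
If `M(X,s,{F_n}) = 0`, then compactness provides, at every scale `ε`, finite covers of `X` by Bowen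
balls `B_{F_n}(y,ε)` of arbitrarily large index and arbitrarily small weight `∑ exp(-s|F_n|)`. Given
a finite set `E ⊆ G` and a point `x`, each `c ∈ E` then has a code `(c, y, n)` with
`c • x ∈ B_{F_n}(y,ε)`, which predicts the orbit of `x` up to `ε` on the tile `F_n c`. Temperedness
allows a Vitali-type selection of almost disjoint tiles filling a fixed proportion of `E`. Repeating
the selection on what is left, with tiles so small that the larger ones are almost invariant under
them, fills all of `E` but a proportion `θ`.

A collection `C` of codes arising in this way satisfies `∑_{p ∈ C} |F_{n(p)}| ≲ |E|` when `E` is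
almost invariant. The elementary bound `∑_{C ⊆ Ω} ∏_{p ∈ C} a_p = ∏_{p ∈ Ω} (1 + a_p) ≤ exp(∑ a_p)`,
with `a_p = exp(-s|F_{n(p)}|)`, shows that there are at most `exp((s + o(1))|E|)` such collections,
and the elements of `E` left untiled cost a factor of only `|𝒰|^{θ|E|}`. Taking `ε` to be a Lebesgue
number of `𝒰` gives `N(⋁_{g∈E} g⁻¹𝒰) ≤ exp((s + o(1))|E|)`.
-/

section QuasiTilings

open scoped Finset

section AlmostDisjoint

variable {α ι : Type*} [DecidableEq α] {t : ℝ} {T : ι → Finset α}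

/-- Almost disjointness of the finite family `(T i)_{i ∈ S}`, as in the theory of quasi-tilings:
overlaps cost at most the proportion `t` of the total cardinality. -/
def IsAlmostDisjoint (t : ℝ) (S : Finset ι) (T : ι → Finset α) : Prop :=
  (1 - t) * ∑ i ∈ S, (#(T i) : ℝ) ≤ #(S.biUnion T)

lemma isAlmostDisjoint_empty : IsAlmostDisjoint t ∅ T := by
  simp [IsAlmostDisjoint]

lemma IsAlmostDisjoint.insert [DecidableEq ι] {S : Finset ι} {i : ι} (hS : IsAlmostDisjoint t S T)
    (hi : i ∉ S) (hT : (#(T i ∩ S.biUnion T) : ℝ) ≤ t * #(T i)) :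
    IsAlmostDisjoint t (insert i S) T := by
  unfold IsAlmostDisjoint at hS ⊢
  have hcard : (#(T i ∪ S.biUnion T) : ℝ) + #(T i ∩ S.biUnion T) = #(T i) + #(S.biUnion T) := by
    exact_mod_cast Finset.card_union_add_card_inter _ _
  rw [Finset.sum_insert hi, Finset.biUnion_insert]
  linarith

lemma IsAlmostDisjoint.union [DecidableEq ι] {S S' : Finset ι} (ht : t ≤ 1)
    (hS : IsAlmostDisjoint t S T) (hS' : IsAlmostDisjoint t S' T)
    (hdisj : Disjoint (S.biUnion T) (S'.biUnion T)) : IsAlmostDisjoint t (S ∪ S') T := by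
  unfold IsAlmostDisjoint at hS hS' ⊢
  have hsum : ∑ i ∈ S ∪ S', (#(T i) : ℝ) ≤ ∑ i ∈ S, (#(T i) : ℝ) + ∑ i ∈ S', (#(T i) : ℝ) := by
    rw [← Finset.sum_union_inter]
    exact le_add_of_nonneg_right (by positivity)
  rw [Finset.union_biUnion, Finset.card_union_of_disjoint hdisj]
  push_cast
  linarith [mul_le_mul_of_nonneg_left hsum (sub_nonneg.2 ht)]

lemma IsAlmostDisjoint.image {β : Type*} [DecidableEq ι] {S : Finset β} {f : β → ι}
    (hf : Set.InjOn f S) (hS : IsAlmostDisjoint t S fun b => T (f b)) :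
    IsAlmostDisjoint t (S.image f) T := by
  unfold IsAlmostDisjoint at hS ⊢
  rwa [Finset.sum_image hf, Finset.image_biUnion]

/-- Every member of `R` meets the union of a maximal almost disjoint subfamily in a proportion `t`
of its elements, while each element of that union is counted at most `m` times. -/
lemma exists_isAlmostDisjoint_mul_card_le (ht : 0 ≤ t) (ht1 : t ≤ 1) {R : Finset ι} {m : ℕ}
    (hm : 0 < m) (hlarge : ∀ i ∈ R, m ≤ #(T i)) (hmult : ∀ a, #{i ∈ R | a ∈ T i} ≤ m) :
    ∃ S ⊆ R, IsAlmostDisjoint t S T ∧ t * #R ≤ #(S.biUnion T) := by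
  classical
  obtain ⟨S, -, hmax⟩ := (R.powerset.filter (IsAlmostDisjoint t · T)).exists_le_maximal
    (a := ∅) (by simp [isAlmostDisjoint_empty])
  obtain ⟨hSR, hS⟩ : S ⊆ R ∧ IsAlmostDisjoint t S T := by simpa using hmax.prop
  have hmeet : ∀ i ∈ R, t * #(T i) ≤ #(T i ∩ S.biUnion T) := by
    intro i hi
    by_cases hiS : i ∈ S
    · rw [Finset.inter_eq_left.2 (Finset.subset_biUnion_of_mem T hiS)]
      exact mul_le_of_le_one_left (Nat.cast_nonneg _) ht1
    · by_contra! hlt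
      have hins : insert i S ∈ R.powerset.filter (IsAlmostDisjoint t · T) := by
        simpa using ⟨Finset.insert_subset hi hSR, hS.insert hiS hlt.le⟩
      exact hiS (hmax.le_of_ge hins (Finset.subset_insert i S) (Finset.mem_insert_self i S))
  have hcount : #R • (t * m) ≤ #(S.biUnion T) • (m : ℝ) := by
    refine Finset.card_nsmul_le_card_nsmul (fun i a => a ∈ T i) (fun i hi => ?_) fun a _ => ?_
    · rw [Finset.bipartiteAbove, Finset.filter_mem_eq_inter, Finset.inter_comm]
      exact (mul_le_mul_of_nonneg_left (by exact_mod_cast hlarge i hi) ht).trans (hmeet i hi)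
    · exact_mod_cast hmult a
  refine ⟨S, hSR, hS, le_of_mul_le_mul_right ?_ (Nat.cast_pos.2 hm : (0 : ℝ) < m)⟩
  simpa only [nsmul_eq_mul, mul_left_comm, mul_assoc] using hcount

end AlmostDisjoint

section Tiles

variable {ι : Type*} [Group G] [DecidableEq G] {F : ℕ → Finset G}

lemma not_disjoint_mul_singleton_iff {A V : Finset G} {c : G} :
    ¬Disjoint (A * {c}) V ↔ c ∈ A⁻¹ * V := by
  rw [Finset.not_disjoint_iff]
  constructor
  · rintro ⟨_, hac, hv⟩
    obtain ⟨a, ha, rfl⟩ := by simpa [Finset.mem_mul] using hac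
    exact Finset.mem_mul.2 ⟨a⁻¹, by simpa using ha, _, hv, by simp⟩
  · intro hc
    obtain ⟨a, ha, v, hv, rfl⟩ := Finset.mem_mul.1 hc
    exact ⟨v, Finset.mem_mul.2 ⟨a⁻¹, by simpa using ha, a * v, by simp, by simp⟩, hv⟩

lemma card_filter_mem_mul_singleton_le (A R : Finset G) (g : G) :
    #{c ∈ R | g ∈ A * {c}} ≤ #A := by
  have hsub : {c ∈ R | g ∈ A * {c}} ⊆ A⁻¹ * {g} := fun c hc => by
    rw [← not_disjoint_mul_singleton_iff, Finset.disjoint_singleton_right, not_not]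
    exact (Finset.mem_filter.1 hc).2
  simpa using Finset.card_le_card hsub

lemma biUnion_mul_singleton (A S : Finset G) : (S.biUnion fun c => A * {c}) = A * S := by
  simp only [Finset.mul_singleton]
  exact Finset.biUnion_op_smul_finset A S

lemma card_mul_tile_sdiff (K A : Finset G) (c : G) :
    #((K * (A * {c})) \ (A * {c})) = #((K * A) \ A) := by
  rw [← mul_assoc, Finset.mul_singleton, Finset.mul_singleton, ← Finset.smul_finset_sdiff,
    Finset.card_smul_finset]

lemma card_mul_biUnion_sdiff_le {K : Finset G} {S : Finset ι} {T : ι → Finset G} {η : ℝ}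
    (hT : ∀ i ∈ S, (#((K * T i) \ T i) : ℝ) ≤ η * #(T i)) :
    (#((K * S.biUnion T) \ S.biUnion T) : ℝ) ≤ η * ∑ i ∈ S, (#(T i) : ℝ) := by
  have hsub : (K * S.biUnion T) \ S.biUnion T ⊆ S.biUnion fun i => (K * T i) \ T i := by
    intro g hg
    obtain ⟨hgK, hgT⟩ := Finset.mem_sdiff.1 hg
    obtain ⟨k, hk, h, hh, rfl⟩ := Finset.mem_mul.1 hgK
    obtain ⟨i, hi, hhi⟩ := Finset.mem_biUnion.1 hh
    exact Finset.mem_biUnion.2 ⟨i, hi, Finset.mem_sdiff.2 ⟨Finset.mul_mem_mul hk hhi,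
      fun hmem => hgT (Finset.mem_biUnion.2 ⟨i, hi, hmem⟩)⟩⟩
  calc (#((K * S.biUnion T) \ S.biUnion T) : ℝ)
      ≤ ∑ i ∈ S, (#((K * T i) \ T i) : ℝ) := by
        exact_mod_cast (Finset.card_le_card hsub).trans Finset.card_biUnion_le
    _ ≤ η * ∑ i ∈ S, (#(T i) : ℝ) := by
        rw [Finset.mul_sum]
        exact Finset.sum_le_sum hT

lemma IsFolnerSeq.eventually_card_mul_sdiff_le (hF : IsFolnerSeq F) (K : Finset G) {η : ℝ}
    (hη : 0 < η) : ∀ᶠ n in atTop, (#((K * F n) \ F n) : ℝ) ≤ η * #(F n) := by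
  let defect (n : ℕ) (g : G) : ℕ := (symmDiff (F n : Set G) ((g * ·) '' (F n : Set G))).ncard
  have hlim : Tendsto (fun n => ∑ g ∈ K, (defect n g : ℝ) / #(F n)) atTop (𝓝 0) := by
    simpa only [Finset.sum_const_zero] using tendsto_finsetSum K fun g _ => hF g
  have hcard (n : ℕ) : #((K * F n) \ F n) ≤ ∑ g ∈ K, defect n g := by
    have hsub : (K * F n) \ F n ⊆ K.biUnion fun g => g • F n \ F n := fun x hx => by
      obtain ⟨hxK, hxF⟩ := Finset.mem_sdiff.1 hx
      rw [← smul_eq_mul, ← Finset.biUnion_smul_finset] at hxK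
      obtain ⟨g, hg, hxg⟩ := Finset.mem_biUnion.1 hxK
      exact Finset.mem_biUnion.2 ⟨g, hg, Finset.mem_sdiff.2 ⟨hxg, hxF⟩⟩
    refine (Finset.card_le_card hsub).trans (Finset.card_biUnion_le.trans ?_)
    refine Finset.sum_le_sum fun g _ => ?_
    rw [← Set.ncard_coe_finset]
    refine Set.ncard_le_ncard ?_ (((F n).finite_toSet.union
      ((F n).finite_toSet.image _)).subset Set.symmDiff_subset_union)
    rw [Finset.coe_sdiff, Finset.coe_smul_finset]
    exact Set.subset_union_right
  filter_upwards [hlim.eventually_lt_const hη] with n hn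
  rcases (F n).eq_empty_or_nonempty with h0 | hne
  · simp [h0]
  · rw [← Finset.sum_div, div_lt_iff₀ (by exact_mod_cast hne.card_pos)] at hn
    exact le_trans (by exact_mod_cast hcard n) hn.le

lemma IsTemperedSeq.exists_card_le (hF : IsTemperedSeq F) :
    ∃ D : ℝ, 0 < D ∧ ∀ n, (#(((Finset.range n).biUnion F)⁻¹ * F n) : ℝ) ≤ D * #(F n) := by
  obtain ⟨D, hD, hF⟩ := hF
  refine ⟨D, hD, fun n => ?_⟩
  rw [← Set.ncard_coe_finset]
  convert hF n using 3
  ext g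
  simp only [Finset.coe_mul, Finset.coe_inv, Finset.coe_biUnion, ← Set.iUnion_mul, ← Set.iUnion_inv]
  simp

/-- A Vitali covering property, the form in which temperedness enters: the centres of any finitely
many prescribed tiles `F_{n(c)} c` number at most `κ` times the size of the union of some `t`-almost
disjoint subfamily. -/
def HasVitaliCovering (F : ℕ → Finset G) (t κ : ℝ) : Prop :=
  ∀ (n : G → ℕ) (R : Finset G), (∀ c ∈ R, (F (n c)).Nonempty) →
    ∃ S ⊆ R, IsAlmostDisjoint t S (fun c => F (n c) * {c}) ∧
      (#R : ℝ) ≤ κ * #(S.biUnion fun c => F (n c) * {c})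

lemma exists_subset_card_mul_card_le_card_mul {t : ℝ} (ht : 0 ≤ t) (ht1 : t ≤ 1) {A : Finset G}
    (hA : A.Nonempty) (R : Finset G) :
    ∃ S ⊆ R, (1 - t) * (#S * #A) ≤ #(A * S) ∧ t * #R ≤ #(A * S) := by
  have hlarge : ∀ c ∈ R, #A ≤ #(A * {c}) := fun c _ => (Finset.card_mul_singleton A c).ge
  obtain ⟨S, hSR, hS, hcard⟩ := exists_isAlmostDisjoint_mul_card_le ht ht1 hA.card_pos hlarge
    (card_filter_mem_mul_singleton_le A R)
  unfold IsAlmostDisjoint at hS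
  simp only [biUnion_mul_singleton, Finset.card_mul_singleton, Finset.sum_const,
    nsmul_eq_mul] at hS hcard
  exact ⟨S, hSR, hS, hcard⟩

lemma card_mul_le_of_almostDisjoint {A B S : Finset G} {D t : ℝ} (hD : 0 ≤ D) (ht1 : t < 1)
    (hB : (#B : ℝ) ≤ D * #A) (hS : (1 - t) * (#S * #A) ≤ #(A * S)) :
    (#(B * S) : ℝ) ≤ D / (1 - t) * #(A * S) := calc
  (#(B * S) : ℝ) ≤ #B * #S := by exact_mod_cast Finset.card_mul_le
  _ ≤ D * #A * #S := mul_le_mul_of_nonneg_right hB (Nat.cast_nonneg _)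
  _ = D / (1 - t) * ((1 - t) * (#S * #A)) := by field_simp [(sub_pos.2 ht1).ne']
  _ ≤ D / (1 - t) * #(A * S) := mul_le_mul_of_nonneg_left hS (div_nonneg hD (sub_pos.2 ht1).le)

/-- The tiles of maximal index `m` that are selected meet few tiles: those of index `m` are few by
maximality of the selection, the others by temperedness. -/
lemma exists_isAlmostDisjoint_card_meeting_le {D t : ℝ} (hD : 0 ≤ D) (ht : 0 < t) (ht1 : t < 1)
    (hF : ∀ n, (#(((Finset.range n).biUnion F)⁻¹ * F n) : ℝ) ≤ D * #(F n)) (n : G → ℕ)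
    {R : Finset G} (hR : R.Nonempty) (hne : ∀ c ∈ R, (F (n c)).Nonempty) :
    ∃ S ⊆ R, S.Nonempty ∧ IsAlmostDisjoint t S (fun c => F (n c) * {c}) ∧
      (#{c ∈ R | ¬Disjoint (F (n c) * {c}) (S.biUnion fun c => F (n c) * {c})} : ℝ) ≤
        (t⁻¹ + D / (1 - t)) * #(S.biUnion fun c => F (n c) * {c}) := by
  set T : G → Finset G := fun c => F (n c) * {c}
  obtain ⟨c₀, hc₀, hmax⟩ := R.exists_max_image n hR
  obtain ⟨m, hm⟩ : ∃ m, n c₀ = m := ⟨_, rfl⟩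
  set Rtop : Finset G := {c ∈ R | n c = m}
  set P := (Finset.range m).biUnion F
  obtain ⟨S, hSR, hS, htop⟩ :=
    exists_subset_card_mul_card_le_card_mul ht.le ht1.le (hm ▸ hne c₀ hc₀) Rtop
  have hT : ∀ c ∈ S, T c = F m * {c} := fun c hc => by
    simp only [T, (Finset.mem_filter.1 (hSR hc)).2]
  have hV : S.biUnion T = F m * S := by
    rw [Finset.biUnion_congr rfl hT, biUnion_mul_singleton]
  have hmeet : {c ∈ R | ¬Disjoint (T c) (F m * S)} ⊆ Rtop ∪ P⁻¹ * F m * S := by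
    intro c hc
    obtain ⟨hcR, hcV⟩ := Finset.mem_filter.1 hc
    rcases (hm ▸ hmax c hcR).eq_or_lt with hcm | hcm
    · exact Finset.mem_union_left _ (Finset.mem_filter.2 ⟨hcR, hcm⟩)
    · have hFP : F (n c) ⊆ P := Finset.subset_biUnion_of_mem F (Finset.mem_range.2 hcm)
      rw [mul_assoc]
      exact Finset.mem_union_right _ (Finset.mul_subset_mul_right (Finset.inv_subset_inv hFP)
        (not_disjoint_mul_singleton_iff.1 hcV))
  have hlow : (#(P⁻¹ * F m * S) : ℝ) ≤ D / (1 - t) * #(F m * S) :=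
    card_mul_le_of_almostDisjoint hD ht1 (hF m) hS
  refine ⟨S, hSR.trans (Finset.filter_subset _ _), ?_, ?_, ?_⟩
  · rw [Finset.nonempty_iff_ne_empty]
    rintro rfl
    have hpos : 0 < t * #Rtop := mul_pos ht
      (Nat.cast_pos.2 (Finset.card_pos.2 ⟨c₀, Finset.mem_filter.2 ⟨hc₀, hm⟩⟩))
    exact hpos.not_ge (by simpa using htop)
  · have hsum : ∑ c ∈ S, (#(T c) : ℝ) = #S * #(F m) := by
      rw [← nsmul_eq_mul]
      exact Finset.sum_eq_card_nsmul fun c hc => by simp [hT c hc]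
    rwa [IsAlmostDisjoint, hsum, hV]
  · have hcard : (#{c ∈ R | ¬Disjoint (T c) (F m * S)} : ℝ) ≤ #Rtop + #(P⁻¹ * F m * S) := by
      exact_mod_cast (Finset.card_le_card hmeet).trans (Finset.card_union_le _ _)
    rw [hV]
    linarith [(le_inv_mul_iff₀ ht).2 htop]

lemma IsTemperedSeq.exists_hasVitaliCovering (hF : IsTemperedSeq F) {t : ℝ} (ht : 0 < t)
    (ht1 : t < 1) : ∃ κ : ℝ, 1 ≤ κ ∧ HasVitaliCovering F t κ := by
  obtain ⟨D, hD, hF⟩ := hF.exists_card_le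
  have hκ : 1 ≤ t⁻¹ + D / (1 - t) :=
    le_add_of_le_of_nonneg ((one_le_inv₀ ht).2 ht1.le) (div_nonneg hD.le (sub_pos.2 ht1).le)
  refine ⟨t⁻¹ + D / (1 - t), hκ, fun n R => ?_⟩
  set T : G → Finset G := fun c => F (n c) * {c}
  induction R using Finset.strongInduction with
  | H R ih =>
    intro hne
    rcases R.eq_empty_or_nonempty with rfl | hR
    · exact ⟨∅, subset_rfl, isAlmostDisjoint_empty, by simp⟩
    obtain ⟨S, hSR, ⟨i, hi⟩, hS, hmeet⟩ :=
      exists_isAlmostDisjoint_card_meeting_le hD.le ht ht1 hF n hR hne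
    set R' := {c ∈ R | Disjoint (T c) (S.biUnion T)}
    have hlt : R' ⊂ R := Finset.filter_ssubset.2 ⟨i, hSR hi, fun hdisj =>
      ((hne i (hSR hi)).mul (Finset.singleton_nonempty i)).ne_empty <|
        Finset.disjoint_self_iff_empty _ |>.1
          (hdisj.mono_right (Finset.subset_biUnion_of_mem T hi))⟩
    obtain ⟨S', hS'R, hS', hcard⟩ := ih R' hlt fun c hc => hne c (Finset.mem_filter.1 hc).1
    have hdisj : Disjoint (S.biUnion T) (S'.biUnion T) :=
      (Finset.disjoint_biUnion_right _ _ _).2 fun c hc => (Finset.mem_filter.1 (hS'R hc)).2.symm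
    refine ⟨S ∪ S', Finset.union_subset hSR (hS'R.trans hlt.subset),
      hS.union ht1.le hS' hdisj, ?_⟩
    have hsplit : (#R : ℝ) = #R' + #{c ∈ R | ¬Disjoint (T c) (S.biUnion T)} := by
      exact_mod_cast (Finset.card_filter_add_card_filter_not _).symm
    rw [Finset.union_biUnion, Finset.card_union_of_disjoint hdisj, hsplit]
    push_cast
    linarith

end Tiles

section Weights

variable {F : ℕ → Finset G} {s : ℝ}

/-- The weight `∑_{(y,n) ∈ I} exp(-s|F_n|)` of a finite family of Bowen balls, as in `ballM`. -/
noncomputable def bowenWeight (F : ℕ → Finset G) (s : ℝ) (I : Finset (X × ℕ)) : ℝ :=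
  ∑ p ∈ I, Real.exp (-s * #(F p.2))

lemma bowenWeight_union_le [DecidableEq X] (I I' : Finset (X × ℕ)) :
    bowenWeight F s (I ∪ I') ≤ bowenWeight F s I + bowenWeight F s I' := by
  unfold bowenWeight
  rw [← Finset.sum_union_inter]
  exact le_add_of_nonneg_right (by positivity)

lemma card_le_exp_of_sum_le {α : Type*} {Ω : Finset α} {w : α → ℝ} {B : ℝ} {V : Finset (Finset α)}
    (hs : 0 ≤ s) (hVΩ : ∀ C ∈ V, C ⊆ Ω) (hVB : ∀ C ∈ V, ∑ p ∈ C, w p ≤ B) :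
    (#V : ℝ) ≤ Real.exp (s * B + ∑ p ∈ Ω, Real.exp (-s * w p)) := by
  have hprod : ∀ C ∈ V, Real.exp (-(s * B)) ≤ ∏ p ∈ C, Real.exp (-s * w p) := by
    intro C hC
    rw [← Real.exp_sum, ← Finset.mul_sum, neg_mul]
    exact Real.exp_le_exp.2 (neg_le_neg (mul_le_mul_of_nonneg_left (hVB C hC) hs))
  rw [Real.exp_add, ← div_le_iff₀' (Real.exp_pos _), div_eq_mul_inv, ← Real.exp_neg]
  calc (#V : ℝ) * Real.exp (-(s * B))
      ≤ ∑ C ∈ V, ∏ p ∈ C, Real.exp (-s * w p) := by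
        rw [← nsmul_eq_mul]
        exact Finset.card_nsmul_le_sum _ _ _ hprod
    _ ≤ ∑ C ∈ Ω.powerset, ∏ p ∈ C, Real.exp (-s * w p) :=
        Finset.sum_le_sum_of_subset_of_nonneg (fun C hC => Finset.mem_powerset.2 (hVΩ C hC))
          fun C _ _ => Finset.prod_nonneg fun _ _ => (Real.exp_pos _).le
    _ = ∏ p ∈ Ω, (1 + Real.exp (-s * w p)) := (Finset.prod_one_add _).symm
    _ ≤ ∏ p ∈ Ω, Real.exp (Real.exp (-s * w p)) :=
        Finset.prod_le_prod (fun _ _ => by positivity) fun p _ => by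
          simpa only [add_comm] using Real.add_one_le_exp (Real.exp (-s * w p))
    _ = Real.exp (∑ p ∈ Ω, Real.exp (-s * w p)) := (Real.exp_sum _ _).symm

end Weights

section OrbitTilings

variable [Group G] [DecidableEq G] [MetricSpace X] [MulAction G X] {F : ℕ → Finset G}
  {ε s t θ κ : ℝ} {I I' : Finset (X × ℕ)} {x : X} {R R' : Finset G} {C C' : Finset (G × X × ℕ)}

/-- The tile `F_n c` attached to a code `(c, y, n)`, which records that `c • x` lies in the Bowen
ball `B_{F_n}(y, ε)`. -/
def orbitTile (F : ℕ → Finset G) (p : G × X × ℕ) : Finset G :=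
  F p.2.2 * {p.1}

/-- A quasi-tiling along the orbit of `x`: a finite set `C` of codes with centres in `R` and Bowen
balls in `I`, whose tiles are `t`-almost disjoint. On the tiles, the codes determine the orbit of
`x` up to `ε`. -/
structure IsOrbitTiling (F : ℕ → Finset G) (ε t : ℝ) (I : Finset (X × ℕ)) (x : X) (R : Finset G)
    (C : Finset (G × X × ℕ)) : Prop where
  center_mem : ∀ p ∈ C, p.1 ∈ R
  ball_mem : ∀ p ∈ C, p.2 ∈ I
  smul_mem : ∀ p ∈ C, p.1 • x ∈ bowenBall (F p.2.2) p.2.1 ε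
  almostDisjoint : IsAlmostDisjoint t C (orbitTile F)

lemma isOrbitTiling_empty : IsOrbitTiling F ε t I x R ∅ :=
  ⟨by simp, by simp, by simp, isAlmostDisjoint_empty⟩

namespace IsOrbitTiling

lemma union [DecidableEq X] (ht : t ≤ 1) (hC : IsOrbitTiling F ε t I x R C)
    (hC' : IsOrbitTiling F ε t I' x R' C')
    (hdisj : Disjoint (C.biUnion (orbitTile F)) (C'.biUnion (orbitTile F))) :
    IsOrbitTiling F ε t (I ∪ I') x (R ∪ R') (C ∪ C') where
  center_mem p hp := (Finset.mem_union.1 hp).elim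
    (fun h => Finset.mem_union_left _ (hC.center_mem p h))
    fun h => Finset.mem_union_right _ (hC'.center_mem p h)
  ball_mem p hp := (Finset.mem_union.1 hp).elim
    (fun h => Finset.mem_union_left _ (hC.ball_mem p h))
    fun h => Finset.mem_union_right _ (hC'.ball_mem p h)
  smul_mem p hp := (Finset.mem_union.1 hp).elim (hC.smul_mem p) (hC'.smul_mem p)
  almostDisjoint := hC.almostDisjoint.union ht hC'.almostDisjoint hdisj

lemma orbitTile_subset (hC : IsOrbitTiling F ε t I x R C) {p : G × X × ℕ} (hp : p ∈ C) :
    orbitTile F p ⊆ (I.biUnion fun p => F p.2) * {p.1} :=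
  Finset.mul_subset_mul_right
    (Finset.subset_biUnion_of_mem (fun p : X × ℕ => F p.2) (hC.ball_mem p hp))

lemma biUnion_subset (hC : IsOrbitTiling F ε t I x R C) :
    C.biUnion (orbitTile F) ⊆ (I.biUnion fun p => F p.2) * R :=
  Finset.biUnion_subset.2 fun p hp => (hC.orbitTile_subset hp).trans
    (Finset.mul_subset_mul_left (Finset.singleton_subset_iff.2 (hC.center_mem p hp)))

lemma card_union_le {η : ℝ} (hC : IsOrbitTiling F ε t I x R C)
    (hR : (#(((I.biUnion fun p => F p.2) * R) \ R) : ℝ) ≤ η * #R) :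
    (#(R ∪ C.biUnion (orbitTile F)) : ℝ) ≤ (1 + η) * #R := by
  rw [← Finset.union_sdiff_self_eq_union]
  have hcard : (#(R ∪ C.biUnion (orbitTile F) \ R) : ℝ) ≤
      #R + #(((I.biUnion fun p => F p.2) * R) \ R) := by
    exact_mod_cast (Finset.card_union_le _ _).trans
      (Nat.add_le_add_left (Finset.card_le_card (Finset.sdiff_subset_sdiff hC.biUnion_subset
        subset_rfl)) _)
  linarith

lemma sum_card_le {η : ℝ} (ht1 : t < 1) (hC : IsOrbitTiling F ε t I x R C)
    (hR : (#(((I.biUnion fun p => F p.2) * R) \ R) : ℝ) ≤ η * #R) :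
    ∑ p ∈ C, (#(F p.2.2) : ℝ) ≤ (1 + η) / (1 - t) * #R := by
  have hdisj := hC.almostDisjoint
  have hsub : (#(C.biUnion (orbitTile F)) : ℝ) ≤ #(R ∪ C.biUnion (orbitTile F)) := by
    exact_mod_cast Finset.card_le_card Finset.subset_union_right
  simp only [IsAlmostDisjoint, orbitTile, Finset.card_mul_singleton] at hdisj hsub
  rw [div_mul_eq_mul_div, le_div_iff₀' (sub_pos.2 ht1)]
  exact hdisj.trans (hsub.trans (hC.card_union_le hR))

lemma card_sdiff_le {η : ℝ} (hC : IsOrbitTiling F ε t I x R C)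
    (hR : (#(((I.biUnion fun p => F p.2) * R) \ R) : ℝ) ≤ η * #R)
    (hcover : (1 - θ) * #R ≤ #(C.biUnion (orbitTile F))) :
    (#(R \ C.biUnion (orbitTile F)) : ℝ) ≤ (η + θ) * #R := by
  have hcard : (#(R \ C.biUnion (orbitTile F)) : ℝ) + #(C.biUnion (orbitTile F)) =
      #(R ∪ C.biUnion (orbitTile F)) := by
    exact_mod_cast Finset.card_sdiff_add_card _ _
  linarith [hC.card_union_le hR]

/-- The tiling of the rest of `R` must also avoid the centres whose `I₀`-tiles would meet the tiles
already present; these are few, since the shapes of the latter are almost invariant. -/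
lemma exists_extension [DecidableEq X] {I₀ : Finset (X × ℕ)} (hθ : 0 ≤ θ) (hθ1 : θ ≤ 1)
    (ht1 : t ≤ 1) (hC : IsOrbitTiling F ε t I x R C)
    (hI : ∀ p ∈ I, (#(((I₀.biUnion fun p => F p.2)⁻¹ * F p.2) \ F p.2) : ℝ) ≤
      θ / 2 * (1 - t) * #(F p.2))
    (hI₀ : ∀ A : Finset G, ∃ C₀, IsOrbitTiling F ε t I₀ x A C₀ ∧
      (1 - θ) * #A ≤ #(C₀.biUnion (orbitTile F))) :
    ∃ C', IsOrbitTiling F ε t (I ∪ I₀) x R C' ∧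
      (1 - θ) * #R + θ / 2 * #(C.biUnion (orbitTile F)) ≤ #(C'.biUnion (orbitTile F)) := by
  set U := C.biUnion (orbitTile F)
  set K := I₀.biUnion fun p => F p.2
  obtain ⟨C₀, hC₀, hcover⟩ := hI₀ (R \ (U ∪ K⁻¹ * U))
  have hdisj : Disjoint U (C₀.biUnion (orbitTile F)) := by
    refine (Finset.disjoint_biUnion_right _ _ _).2 fun p hp => ?_
    refine Disjoint.symm (Disjoint.mono_left (hC₀.orbitTile_subset hp) ?_)
    by_contra hmeet
    exact (Finset.mem_sdiff.1 (hC₀.center_mem p hp)).2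
      (Finset.mem_union_right _ (not_disjoint_mul_singleton_iff.1 hmeet))
  have hboundary : (#((K⁻¹ * U) \ U) : ℝ) ≤ θ / 2 * #U := calc
    (#((K⁻¹ * U) \ U) : ℝ) ≤ θ / 2 * (1 - t) * ∑ p ∈ C, (#(orbitTile F p) : ℝ) :=
      card_mul_biUnion_sdiff_le fun p hp => by
        simpa only [orbitTile, card_mul_tile_sdiff, Finset.card_mul_singleton] using
          hI p.2 (hC.ball_mem p hp)
    _ ≤ θ / 2 * #U := by
      rw [mul_assoc]
      exact mul_le_mul_of_nonneg_left hC.almostDisjoint (by linarith)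
  have hR : (#R : ℝ) ≤ #(R \ (U ∪ K⁻¹ * U)) + (#U + #((K⁻¹ * U) \ U)) := by
    rw [← Finset.union_sdiff_self_eq_union]
    exact_mod_cast (Finset.card_le_card_sdiff_add_card).trans
      (Nat.add_le_add_left (Finset.card_union_le _ _) _)
  refine ⟨C ∪ C₀, ?_, ?_⟩
  · simpa only [Finset.union_eq_left.2 Finset.sdiff_subset] using hC.union ht1 hC₀ hdisj
  · rw [Finset.union_biUnion, Finset.card_union_of_disjoint hdisj]
    push_cast
    have hU : 0 ≤ θ * θ * (#U : ℝ) := by positivity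
    linarith [mul_le_mul_of_nonneg_left (hR.trans (by linarith :
      _ ≤ #(R \ (U ∪ K⁻¹ * U)) + (1 + θ / 2) * #U)) (sub_nonneg.2 hθ1)]

end IsOrbitTiling

lemma HasVitaliCovering.exists_isOrbitTiling (hF : HasVitaliCovering F t κ)
    (hI : ∀ p ∈ I, (F p.2).Nonempty) (hcover : ∀ x : X, ∃ p ∈ I, x ∈ bowenBall (F p.2) p.1 ε)
    (x : X) (R : Finset G) :
    ∃ C, IsOrbitTiling F ε t I x R C ∧ (#R : ℝ) ≤ κ * #(C.biUnion (orbitTile F)) := by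
  classical
  choose q hqI hqx using fun c : G => hcover (c • x)
  obtain ⟨S, hSR, hS, hcard⟩ := hF (fun c => (q c).2) R fun c _ => hI _ (hqI c)
  have hinj : Set.InjOn (fun c => (c, q c)) (S : Set G) := fun c _ c' _ h => congrArg Prod.fst h
  refine ⟨S.image fun c => (c, q c), ⟨?_, ?_, ?_, IsAlmostDisjoint.image hinj hS⟩, ?_⟩
  · exact Finset.forall_mem_image.2 fun c hc => hSR hc
  · exact Finset.forall_mem_image.2 fun c _ => hqI c
  · exact Finset.forall_mem_image.2 fun c _ => hqx c
  · rwa [Finset.image_biUnion]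

/-- For compact `X`, this is what `M(X,s,{F_n}) = 0` says at the scale `ε`: `X` has finite covers by
Bowen balls of arbitrarily large index and arbitrarily small weight. -/
def HasSmallBowenCovers (X : Type*) [MetricSpace X] [MulAction G X] (F : ℕ → Finset G)
    (ε s : ℝ) : Prop :=
  ∀ (N : ℕ) (δ : ℝ), 0 < δ → ∃ I : Finset (X × ℕ), (∀ p ∈ I, N ≤ p.2) ∧
    (∀ x : X, ∃ p ∈ I, x ∈ bowenBall (F p.2) p.1 ε) ∧ bowenWeight F s I ≤ δ

/-- Finite families of Bowen balls of arbitrarily small weight provide orbit tilings of any finite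
set that miss at most the proportion `θ` of it. -/
def HasOrbitTilings (X : Type*) [MetricSpace X] [MulAction G X] (F : ℕ → Finset G)
    (ε s t θ : ℝ) : Prop :=
  ∀ δ : ℝ, 0 < δ → ∃ I : Finset (X × ℕ), bowenWeight F s I ≤ δ ∧ ∀ (x : X) (R : Finset G),
    ∃ C, IsOrbitTiling F ε t I x R C ∧ (1 - θ) * #R ≤ #(C.biUnion (orbitTile F))

lemma hasOrbitTilings_one : HasOrbitTilings X F ε s t 1 := fun δ hδ =>
  ⟨∅, by simpa [bowenWeight] using hδ.le, fun _ _ => ⟨∅, isOrbitTiling_empty, by simp⟩⟩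

lemma HasOrbitTilings.mono {θ' : ℝ} (h : HasOrbitTilings X F ε s t θ) (hθ : θ ≤ θ') :
    HasOrbitTilings X F ε s t θ' := fun δ hδ => by
  obtain ⟨I, hIs, hI⟩ := h δ hδ
  refine ⟨I, hIs, fun x R => ?_⟩
  obtain ⟨C, hC, hcover⟩ := hI x R
  exact ⟨C, hC, (mul_le_mul_of_nonneg_right (by linarith) (Nat.cast_nonneg _)).trans hcover⟩

lemma HasOrbitTilings.improve (hFol : IsFolnerSeq F) (hne : ∀ᶠ n in atTop, (F n).Nonempty)
    (hκ : 0 < κ) (hV : HasVitaliCovering F t κ) (ht1 : t < 1) (hcov : HasSmallBowenCovers X F ε s)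
    (hθ : 0 < θ) (hθ1 : θ ≤ 1) (h : HasOrbitTilings X F ε s t θ) :
    HasOrbitTilings X F ε s t (θ * (1 - 1 / (2 * κ))) := by
  classical
  intro δ hδ
  obtain ⟨I₀, hI₀s, hI₀⟩ := h (δ / 2) (half_pos hδ)
  obtain ⟨N, hN⟩ := eventually_atTop.1 ((hFol.eventually_card_mul_sdiff_le
    (I₀.biUnion fun p => F p.2)⁻¹ (mul_pos (half_pos hθ) (sub_pos.2 ht1))).and hne)
  obtain ⟨I₁, hI₁N, hI₁, hI₁s⟩ := hcov N (δ / 2) (half_pos hδ)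
  refine ⟨I₁ ∪ I₀, (bowenWeight_union_le _ _).trans (by linarith), fun x R => ?_⟩
  obtain ⟨C₁, hC₁, hcard⟩ :=
    hV.exists_isOrbitTiling (fun p hp => (hN _ (hI₁N p hp)).2) hI₁ x R
  obtain ⟨C, hC, hcover⟩ := hC₁.exists_extension hθ.le hθ1 ht1.le
    (fun p hp => (hN _ (hI₁N p hp)).1) (hI₀ x)
  refine ⟨C, hC, le_trans ?_ hcover⟩
  calc (1 - θ * (1 - 1 / (2 * κ))) * #R = (1 - θ) * #R + θ / 2 * (#R / κ) := by
        field_simp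
        ring
    _ ≤ (1 - θ) * #R + θ / 2 * #(C₁.biUnion (orbitTile F)) := by
        gcongr
        exact (div_le_iff₀' hκ).2 hcard

lemma HasSmallBowenCovers.hasOrbitTilings (hcov : HasSmallBowenCovers X F ε s)
    (hFol : IsFolnerSeq F) (hTemp : IsTemperedSeq F) (hne : ∀ᶠ n in atTop, (F n).Nonempty)
    (ht : 0 < t) (ht1 : t < 1) (hθ : 0 < θ) : HasOrbitTilings X F ε s t θ := by
  obtain ⟨κ, hκ, hV⟩ := hTemp.exists_hasVitaliCovering ht ht1
  set r := 1 - 1 / (2 * κ)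
  have hr0 : 0 < r := sub_pos.2 ((div_lt_one (by linarith)).2 (by linarith))
  have hr1 : r < 1 := sub_lt_self 1 (by positivity)
  have hpow (k : ℕ) : HasOrbitTilings X F ε s t (r ^ k) := by
    induction k with
    | zero => simpa using hasOrbitTilings_one
    | succ k ih =>
      rw [pow_succ]
      exact ih.improve hFol hne (by linarith) hV ht1 hcov (pow_pos hr0 k)
        (pow_le_one₀ hr0.le hr1.le)
  obtain ⟨k, hk⟩ := exists_pow_lt_of_lt_one hθ hr1
  exact (hpow k).mono hk.le

end OrbitTilings

section CoverNumbers

variable [Group G] [MulAction G X]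

/-- The labels of a point are dictated by its code `C ∈ V` off `D C`, and arbitrary on `D C`. -/
lemma coverNum_le_card_mul_pow {ι : Type*} {𝒰 : Finset (Set X)} (h𝒰 : 𝒰.Nonempty)
    (hcover : ⋃₀ (𝒰 : Set (Set X)) = Set.univ) {E : Finset G} {V : Finset ι} {D : ι → Finset G}
    {w : ι → G → Set X} {k : ℕ} (hD : ∀ C ∈ V, #(D C) ≤ k) (hw : ∀ C g, w C g ∈ 𝒰)
    (hx : ∀ x : X, ∃ C ∈ V, ∀ g ∈ E, g ∉ D C → g • x ∈ w C g) :
    coverNum 𝒰 E ≤ #V * #𝒰 ^ k := by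
  classical
  let label (C : ι) (v : ∀ g ∈ D C, Set X) (g : G) : Set X := if h : g ∈ D C then v g h else w C g
  let Λ : Finset (G → Set X) := V.biUnion fun C => ((D C).pi fun _ => 𝒰).image (label C)
  have hΛ𝒰 : ∀ u ∈ Λ, ∀ g ∈ E, u g ∈ 𝒰 := by
    intro u hu g _
    obtain ⟨C, -, hu⟩ := Finset.mem_biUnion.1 hu
    obtain ⟨v, hv, rfl⟩ := Finset.mem_image.1 hu
    simp only [label]
    split_ifs with hg
    · exact Finset.mem_pi.1 hv g hg
    · exact hw C g
  have hΛcover : (⋃ u ∈ Λ, ⋂ g ∈ E, (fun y => g • y) ⁻¹' u g) = Set.univ := by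
    have hpoint (y : X) : ∃ W ∈ 𝒰, y ∈ W := Set.mem_sUnion.1 (hcover ▸ Set.mem_univ y)
    choose W hW𝒰 hW using hpoint
    refine Set.eq_univ_of_forall fun x => ?_
    obtain ⟨C, hCV, hC⟩ := hx x
    have hu : label C (fun g _ => W (g • x)) ∈ Λ := Finset.mem_biUnion.2
      ⟨C, hCV, Finset.mem_image_of_mem _ (Finset.mem_pi.2 fun g _ => hW𝒰 _)⟩
    refine Set.mem_biUnion hu (Set.mem_iInter₂.2 fun g hg => ?_)
    simp only [label, Set.mem_preimage]
    split_ifs with hgD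
    · exact hW _
    · exact hC g hg hgD
  calc coverNum 𝒰 E ≤ #Λ := Nat.sInf_le ⟨Λ, rfl, hΛ𝒰, hΛcover⟩
    _ ≤ #V * #𝒰 ^ k := Finset.card_biUnion_le_card_mul _ _ _ fun C hC => by
      refine Finset.card_image_le.trans ?_
      rw [Finset.card_pi, Finset.prod_const]
      exact Nat.pow_le_pow_right h𝒰.card_pos (hD C hC)

lemma coverNum_of_isEmpty [IsEmpty X] (𝒰 : Finset (Set X)) (E : Finset G) : coverNum 𝒰 E = 0 :=
  Nat.le_zero.1 (Nat.sInf_le ⟨∅, rfl, by simp, Subsingleton.elim _ _⟩)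

lemma coverTopEnt_of_isEmpty [IsEmpty X] (F : ℕ → Finset G) (𝒰 : Finset (Set X)) :
    coverTopEnt F 𝒰 = 0 := by
  simp [coverTopEnt, coverNum_of_isEmpty]

end CoverNumbers

section Counting

variable [Group G] [MetricSpace X] [MulAction G X] {F : ℕ → Finset G} {ε s t θ η δ : ℝ}
  {I : Finset (X × ℕ)} {𝒰 : Finset (Set X)} {E : Finset G}

/-- A code `(c, y, n)` predicts the point `(g c⁻¹) • y` at time `g ∈ F_n c`. -/
lemma exists_referencePoint [DecidableEq G] [Nonempty X] (F : ℕ → Finset G) (ε : ℝ) :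
    ∃ z : Finset (G × X × ℕ) → G → X, ∀ {t : ℝ} {I : Finset (X × ℕ)} {x : X} {R : Finset G}
      {C : Finset (G × X × ℕ)}, IsOrbitTiling F ε t I x R C →
        ∀ g ∈ C.biUnion (orbitTile F), dist (z C g) (g • x) < ε := by
  have hcode (C : Finset (G × X × ℕ)) (g : G) : ∃ y : X, g ∈ C.biUnion (orbitTile F) →
      ∃ p ∈ C, ∃ a ∈ F p.2.2, a * p.1 = g ∧ y = a • p.2.1 := by
    by_cases hg : g ∈ C.biUnion (orbitTile F)
    · obtain ⟨p, hp, hgp⟩ := Finset.mem_biUnion.1 hg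
      obtain ⟨a, ha, hag⟩ : ∃ a ∈ F p.2.2, a * p.1 = g := by
        simpa [orbitTile, Finset.mem_mul] using hgp
      exact ⟨a • p.2.1, fun _ => ⟨p, hp, a, ha, hag, rfl⟩⟩
    · exact ⟨Classical.arbitrary X, fun h => absurd h hg⟩
  choose z hz using hcode
  refine ⟨z, fun hC g hg => ?_⟩
  obtain ⟨p, hp, a, ha, rfl, hzg⟩ := hz _ g hg
  rw [hzg, mul_smul]
  exact hC.smul_mem p hp a ha

lemma coverNum_le_exp_mul_pow [DecidableEq G] [Nonempty X] (hs : 0 ≤ s) (ht1 : t < 1)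
    (h𝒰 : 𝒰.Nonempty) (hcover : ⋃₀ (𝒰 : Set (Set X)) = Set.univ)
    (hleb : ∀ x, ∃ W ∈ 𝒰, Metric.ball x ε ⊆ W) (hIs : bowenWeight F s I ≤ δ)
    (hE : (#(((I.biUnion fun p => F p.2) * E) \ E) : ℝ) ≤ η * #E)
    (hI : ∀ x : X, ∃ C, IsOrbitTiling F ε t I x E C ∧ (1 - θ) * #E ≤ #(C.biUnion (orbitTile F))) :
    (coverNum 𝒰 E : ℝ) ≤
      Real.exp ((s * ((1 + η) / (1 - t)) + δ) * #E) * (#𝒰 : ℝ) ^ ⌊(η + θ) * #E⌋₊ := by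
  classical
  choose W hW𝒰 hW using hleb
  obtain ⟨z, hz⟩ := exists_referencePoint (X := X) F ε
  let V : Finset (Finset (G × X × ℕ)) := {C ∈ (E ×ˢ I).powerset |
    ∑ p ∈ C, (#(F p.2.2) : ℝ) ≤ (1 + η) / (1 - t) * #E ∧
      #(E \ C.biUnion (orbitTile F)) ≤ ⌊(η + θ) * #E⌋₊}
  have hV : (#V : ℝ) ≤ Real.exp ((s * ((1 + η) / (1 - t)) + δ) * #E) := by
    refine (card_le_exp_of_sum_le hs (Ω := E ×ˢ I) (w := fun p => #(F p.2.2))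
      (fun C hC => Finset.mem_powerset.1 (Finset.mem_filter.1 hC).1)
      fun C hC => (Finset.mem_filter.1 hC).2.1).trans (Real.exp_le_exp.2 ?_)
    have hweight := mul_le_mul_of_nonneg_left hIs (Nat.cast_nonneg (α := ℝ) #E)
    simp only [Finset.sum_product, Finset.sum_const, nsmul_eq_mul]
    unfold bowenWeight at hweight
    linarith
  have hcode : ∀ x : X, ∃ C ∈ V, ∀ g ∈ E, g ∉ E \ C.biUnion (orbitTile F) →
      g • x ∈ W (z C g) := by
    intro x
    obtain ⟨C, hC, hCcover⟩ := hI x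
    refine ⟨C, Finset.mem_filter.2 ⟨Finset.mem_powerset.2 fun p hp => ?_, hC.sum_card_le ht1 hE,
      Nat.le_floor (hC.card_sdiff_le hE hCcover)⟩, fun g hg hgC => ?_⟩
    · exact Finset.mem_product.2 ⟨hC.center_mem p hp, hC.ball_mem p hp⟩
    · have hgC : g ∈ C.biUnion (orbitTile F) := by simpa [hg] using hgC
      exact hW _ (Metric.mem_ball'.2 (hz hC g hgC))
  calc (coverNum 𝒰 E : ℝ) ≤ #V * (#𝒰 : ℝ) ^ ⌊(η + θ) * #E⌋₊ := by
        exact_mod_cast coverNum_le_card_mul_pow h𝒰 hcover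
          (fun C hC => (Finset.mem_filter.1 hC).2.2) (fun C g => hW𝒰 (z C g)) hcode
    _ ≤ _ := mul_le_mul_of_nonneg_right hV (by positivity)

end Counting

lemma log_le_of_le_exp_mul_pow {N m : ℕ} {a b : ℝ} (ha : 0 ≤ a) (hb : 0 ≤ b)
    (h : (N : ℝ) ≤ Real.exp a * (m : ℝ) ^ ⌊b⌋₊) : Real.log N ≤ a + b * Real.log m := by
  have hbm : 0 ≤ b * Real.log m := mul_nonneg hb (Real.log_natCast_nonneg m)
  rcases N.eq_zero_or_pos with rfl | hN
  · simpa using add_nonneg ha hbm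
  have hpow : (0 : ℝ) < (m : ℝ) ^ ⌊b⌋₊ :=
    pos_of_mul_pos_right ((Nat.cast_pos.2 hN).trans_le h) (Real.exp_pos a).le
  calc Real.log N ≤ Real.log (Real.exp a * (m : ℝ) ^ ⌊b⌋₊) := Real.log_le_log (by positivity) h
    _ = a + ⌊b⌋₊ * Real.log m := by
      rw [Real.log_mul (Real.exp_pos a).ne' hpow.ne', Real.log_exp, Real.log_pow]
    _ ≤ a + b * Real.log m := by
      gcongr
      exact Nat.floor_le hb

lemma GrowthCond.eventually_nonempty {F : ℕ → Finset G} (h : GrowthCond F) :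
    ∀ᶠ n in atTop, (F n).Nonempty := by
  filter_upwards [h.eventually_gt_atTop 0] with n hn
  rw [Finset.nonempty_iff_ne_empty]
  intro h0
  simp [h0] at hn

section Entropy

variable [Group G] [MetricSpace X] [MulAction G X] {F : ℕ → Finset G} {ε s : ℝ}

lemma HasSmallBowenCovers.pos [Nonempty X] (h : HasSmallBowenCovers X F ε s) : 0 < s := by
  obtain ⟨I, -, hI, hIs⟩ := h 0 (1 / 2) one_half_pos
  obtain ⟨p, hp, -⟩ := hI (Classical.arbitrary X)
  have hexp : Real.exp (-s * #(F p.2)) < 1 := calc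
    Real.exp (-s * #(F p.2)) ≤ bowenWeight F s I :=
      Finset.single_le_sum (f := fun p : X × ℕ => Real.exp (-s * #(F p.2)))
        (fun _ _ => (Real.exp_pos _).le) hp
    _ < 1 := hIs.trans_lt one_half_lt_one
  have hneg : -s * #(F p.2) < 0 := Real.exp_lt_one_iff.1 hexp
  exact neg_lt_zero.1 (neg_of_mul_neg_left hneg (Nat.cast_nonneg _))

lemma coverTopEnt_le_of_hasSmallBowenCovers [CompactSpace X] [Nonempty X] (hFol : IsFolnerSeq F)
    (hTemp : IsTemperedSeq F) (hne : ∀ᶠ n in atTop, (F n).Nonempty)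
    (hcov : ∀ ε > 0, HasSmallBowenCovers X F ε s) {𝒰 : Finset (Set X)} (h𝒰 : IsFinOpenCover 𝒰) :
    coverTopEnt F 𝒰 ≤ s := by
  classical
  have hs : 0 ≤ s := (hcov 1 one_pos).pos.le
  have h𝒰ne : 𝒰.Nonempty := by
    obtain ⟨W, hW, -⟩ := Set.mem_sUnion.1 (h𝒰.2 ▸ Set.mem_univ (Classical.arbitrary X))
    exact ⟨W, hW⟩
  obtain ⟨ε, hε, hleb⟩ := lebesgue_number_lemma_of_metric_sUnion isCompact_univ h𝒰.1 h𝒰.2.ge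
  let bound (t : ℝ) : ℝ := s * ((1 + t) / (1 - t)) + t + (t + t) * Real.log #𝒰
  have hbound : ∀ t ∈ Set.Ioo (0 : ℝ) 1, coverTopEnt F 𝒰 ≤ bound t := by
    rintro t ⟨ht, ht1⟩
    obtain ⟨I, hIs, hI⟩ := (hcov ε hε).hasOrbitTilings hFol hTemp hne ht ht1 ht t ht
    refine limsup_le_of_le (IsCoboundedUnder.of_frequently_ge (a := 0) (.of_forall fun n =>
      div_nonneg (Real.log_natCast_nonneg _) (Nat.cast_nonneg _))) ?_
    filter_upwards [hFol.eventually_card_mul_sdiff_le (I.biUnion fun p => F p.2) ht, hne]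
      with n hinv hn
    have hexponent : 0 ≤ (s * ((1 + t) / (1 - t)) + t) * #(F n) := mul_nonneg
      (add_nonneg (mul_nonneg hs (div_nonneg (by linarith) (sub_pos.2 ht1).le)) ht.le)
      (Nat.cast_nonneg _)
    rw [div_le_iff₀ (Nat.cast_pos.2 hn.card_pos)]
    have hlog := log_le_of_le_exp_mul_pow hexponent (by positivity)
      (coverNum_le_exp_mul_pow hs ht1 h𝒰ne h𝒰.2 (fun x => hleb x (Set.mem_univ x)) hIs hinv
        fun x => hI x (F n))
    linarith
  have hlim : Tendsto bound (𝓝[>] 0) (𝓝 s) := by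
    have hcont : ContinuousAt bound 0 := by
      have hden : (1 : ℝ) - 0 ≠ 0 := by norm_num
      unfold bound
      fun_prop (disch := exact hden)
    simpa [bound] using hcont.tendsto.mono_left nhdsWithin_le_nhds
  exact ge_of_tendsto hlim (Filter.mem_of_superset (Ioo_mem_nhdsGT one_pos) hbound)

lemma isOpen_bowenBall [ContinuousConstSMul G X] (F : Finset G) (x : X) (ε : ℝ) :
    IsOpen (bowenBall F x ε) := by
  have hball : bowenBall F x ε = ⋂ g ∈ F, {y : X | dist (g • x) (g • y) < ε} := by
    ext y
    simp [bowenBall]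
  rw [hball]
  exact isOpen_biInter_finset fun g _ => isOpen_lt (by fun_prop) continuous_const

lemma ballM_le_ballMtot (hε : 0 < ε) (Z : Set X) (N : ℕ) : ballM F Z N ε s ≤ ballMtot F Z s :=
  (le_iSup (fun N => ballM F Z N ε s) N).trans
    (le_iSup₂ (f := fun (ε : ℝ) (_ : 0 < ε) => ballMN F Z ε s) ε hε)

lemma hasSmallBowenCovers_of_ballMtot_eq_zero [CompactSpace X] [ContinuousConstSMul G X]
    (hs : ballMtot F (Set.univ : Set X) s = 0) (hε : 0 < ε) : HasSmallBowenCovers X F ε s := by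
  classical
  intro N δ hδ
  have hlt : ballM F (Set.univ : Set X) N ε s < ENNReal.ofReal δ :=
    ((ballM_le_ballMtot hε _ N).trans_eq hs).trans_lt (ENNReal.ofReal_pos.2 hδ)
  simp only [ballM, iInf_lt_iff] at hlt
  obtain ⟨J, -, hJN, hJ, hJs⟩ := hlt
  obtain ⟨I, hIJ, hI⟩ := isCompact_univ.elim_finite_subcover_image
    (fun p _ => isOpen_bowenBall (F p.2) p.1 ε) hJ
  lift I to Finset (X × ℕ) using hI.1
  refine ⟨I, fun p hp => hJN p (hIJ hp), fun x => ?_, ?_⟩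
  · simpa only [Set.mem_iUnion₂, exists_prop, Finset.mem_coe] using hI.2 (Set.mem_univ x)
  · refine (ENNReal.ofReal_le_ofReal_iff hδ.le).1 (le_trans ?_ hJs.le)
    rw [bowenWeight, ENNReal.ofReal_sum_of_nonneg fun _ _ => (Real.exp_pos _).le,
      ← Finset.tsum_subtype]
    exact ENNReal.tsum_mono_subtype (fun p : X × ℕ => ENNReal.ofReal (Real.exp (-s * #(F p.2)))) hIJ

theorem topEnt_le_bowenEnt_general [CompactSpace X] [ContinuousConstSMul G X]
    (hFol : IsFolnerSeq F) (hTemp : IsTemperedSeq F) (hne : ∀ᶠ n in atTop, (F n).Nonempty) :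
    topEnt (G := G) X F ≤ bowenEnt F (Set.univ : Set X) := by
  refine iSup₂_le fun 𝒰 h𝒰 => ?_
  rcases isEmpty_or_nonempty X with hX | hX
  · simp [coverTopEnt_of_isEmpty]
  · exact le_iInf₂ fun s hs => ENNReal.ofReal_le_ofReal <|
      coverTopEnt_le_of_hasSmallBowenCovers hFol hTemp hne
        (fun ε hε => hasSmallBowenCovers_of_ballMtot_eq_zero hs hε) h𝒰

end Entropy

end QuasiTilings

/-- For a countable discrete amenable group `G` acting continuously on a
compact metric space `X` and a tempered Følner sequence `{F_n}` with `lim_n |F_n|/log n = ∞`,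
`h_top(X,G) ≤ h^B_top(X,{F_n})`. -/
theorem topEnt_le_bowenEnt
    [Group G] [Countable G] [MetricSpace X] [CompactSpace X]
    [MulAction G X] [ContinuousConstSMul G X]
    (F : ℕ → Finset G) (hFol : IsFolnerSeq F) (hTemp : IsTemperedSeq F)
    (hGrow : GrowthCond F) :
    topEnt (G := G) X F ≤ bowenEnt F (Set.univ : Set X) :=
  topEnt_le_bowenEnt_general hFol hTemp hGrow.eventually_nonempty
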